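/- arXiv:1411.7929 — 2 statements merged into one kernel-verified Lean document; each statement's English description precedes it below -/
import Mathlib

section
/- Let ε>0, Δt>0, a21, a22 ∈ ℝ with ε + a22·Δt ≠ 0, let J be a finite index set with velocity nodes v_j ∈ ℝ (j∈J), and let real numbers g_j, K_j, M_j, F_j (j∈J) satisfy the DIRK stage equation F_j = g_j + Δt·(a21·K_j + (a22/ε)(M_j − F_j)) for every j. Then: (a) F_j = (ε(g_j + Δt·a21·K_j) + Δt·a22·M_j)/(ε + a22·Δt) for every j; and (b) if Σ_j M_j·φ(v_j) = Σ_j F_j·φ(v_j) for each φ(v) ∈ {1, v, v²}, then Σ_j F_j·φ(v_j) = Σ_j (g_j + Δt·a21·K_j)·φ(v_j) for each φ(v) ∈ {1, v, v²}. -/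
/-!
The stage equation is linear in `F j`, so multiplying by `ε` and collecting `F j` gives the explicit
formula. For the moments, weight the stage equation by `φ` and sum: the relaxation term contributes
`Δt * (a22 / ε)` times the difference of the `φ`-moments of `M` and `F`, which vanishes.
-/

/-- DIRK second-stage equation of the RK2 semilagrangian scheme: explicit solution of
the implicit stage equation, and computation of the stage moments. -/
theorem dirk_stage (ε Δt a21 a22 : ℝ) (hε : 0 < ε) (hΔt : 0 < Δt)
    (hden : ε + a22 * Δt ≠ 0)
    (J : Type*) [Fintype J] (v : J → ℝ)
    (g K M F : J → ℝ)
    (hupd : ∀ j, F j = g j + Δt * (a21 * K j + (a22 / ε) * (M j - F j))) :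
    (∀ j, F j = (ε * (g j + Δt * a21 * K j) + Δt * a22 * M j) / (ε + a22 * Δt)) ∧
    ((∑ j, M j * 1 = ∑ j, F j * 1) →
     (∑ j, M j * v j = ∑ j, F j * v j) →
     (∑ j, M j * (v j) ^ 2 = ∑ j, F j * (v j) ^ 2) →
     (∑ j, F j * 1 = ∑ j, (g j + Δt * a21 * K j) * 1) ∧
     (∑ j, F j * v j = ∑ j, (g j + Δt * a21 * K j) * v j) ∧
     (∑ j, F j * (v j) ^ 2 = ∑ j, (g j + Δt * a21 * K j) * (v j) ^ 2)) := by
  -- The relaxation term carries no `φ`-moment when `M` and `F` have the same one.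
  have key : ∀ φ : J → ℝ, ∑ j, M j * φ j = ∑ j, F j * φ j →
      ∑ j, F j * φ j = ∑ j, (g j + Δt * a21 * K j) * φ j := by
    intro φ h
    calc ∑ j, F j * φ j
        = ∑ j, ((g j + Δt * a21 * K j) * φ j
            + Δt * (a22 / ε) * (M j * φ j - F j * φ j)) :=
          Finset.sum_congr rfl fun j _ => by linear_combination φ j * hupd j
      _ = ∑ j, (g j + Δt * a21 * K j) * φ j := by
          rw [Finset.sum_add_distrib, ← Finset.mul_sum, Finset.sum_sub_distrib, h,
            sub_self, mul_zero, add_zero]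
  refine ⟨fun j => ?_, fun h0 h1 h2 =>
    ⟨key (fun _ => 1) h0, key v h1, key (fun j => v j ^ 2) h2⟩⟩
  have hcancel : a22 / ε * ε = a22 := div_mul_cancel₀ a22 hε.ne'
  rw [eq_div_iff hden]
  linear_combination ε * hupd j + Δt * (M j - F j) * hcancel
end

section
/- Let Δx > 0 and let x_{j−2}, x_{j−1}, x_j, x_{j+1}, x_{j+2}, x_{j+3} be six equally spaced real nodes with x_{k+1} − x_k = Δx. Let v_{j−2},…,v_{j+3} ∈ ℝ, let P be the unique polynomial of degree ≤ 5 with P(x_k) = v_k for k = j−2,…,j+3, and let P_L, P_C, P_R be the unique polynomials of degree ≤ 3 interpolating the data on the substencils {x_{j−2}, x_{j−1}, x_j, x_{j+1}}, {x_{j−1}, x_j, x_{j+1}, x_{j+2}}, and {x_j, x_{j+1}, x_{j+2}, x_{j+3}} respectively. Then for every x ∈ ℝ: P(x) = C_L(x)·P_L(x) + C_C(x)·P_C(x) + C_R(x)·P_R(x), where C_L(x) = (x − x_{j+2})(x − x_{j+3})/(20Δx²), C_C(x) = −(x − x_{j−2})(x − x_{j+3})/(10Δx²), C_R(x) = (x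 − x_{j−2})(x − x_{j−1})/(20Δx²). In particular C_L(x) + C_C(x) + C_R(x) = 1 for all x. -/
/-! The weighted combination of the three cubics is a polynomial of degree at most `2 + 3 = 5`, so
it suffices to compare it with `P` at the six nodes. At each node, the weights of the substencils
that do not contain the node vanish, all the remaining cubics take the value `v k`, and the weights
sum to `1`. -/

open Polynomial in
/-- A quadratic weight, given by its two roots and leading coefficient, times a cubic has degree
at most `5`. -/
lemma degree_weight_mul_le (c a b : ℝ) (p : ℝ[X]) (hp : p.degree ≤ 3) :
    (C c * ((X - C a) * (X - C b)) * p).degree ≤ 5 := by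
  have hq : (C c * ((X - C a) * (X - C b))).degree ≤ 2 := by compute_degree
  calc _ ≤ _ := degree_mul_le _ _
    _ ≤ 2 + 3 := add_le_add hq hp
    _ = 5 := by norm_num

/-- WENO35 linear weights: the quintic interpolant `P` on the six-point stencil
`x₀, x₀+Δx, …, x₀+5Δx` (with `x₀ = x_{j-2}`) is the combination
`C_L(x) P_L(x) + C_C(x) P_C(x) + C_R(x) P_R(x)` of the cubic interpolants on the three
four-point substencils, with
`C_L(x) = (x - x_{j+2})(x - x_{j+3})/(20Δx²)`,
`C_C(x) = -(x - x_{j-2})(x - x_{j+3})/(10Δx²)`,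
`C_R(x) = (x - x_{j-2})(x - x_{j-1})/(20Δx²)`; moreover `C_L + C_C + C_R = 1`. -/
theorem weno35_linear_weights (Δx : ℝ) (hΔx : 0 < Δx) (x₀ : ℝ)
    (v : Fin 6 → ℝ) (P PL PC PR : Polynomial ℝ)
    (hPdeg : P.degree ≤ 5)
    (hP : ∀ k : Fin 6, P.eval (x₀ + (k : ℕ) * Δx) = v k)
    (hPLdeg : PL.degree ≤ 3)
    (hPL : ∀ k : Fin 4, PL.eval (x₀ + (k : ℕ) * Δx) = v ⟨(k : ℕ), by omega⟩)
    (hPCdeg : PC.degree ≤ 3)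
    (hPC : ∀ k : Fin 4, PC.eval (x₀ + ((k : ℕ) + 1) * Δx) = v ⟨(k : ℕ) + 1, by omega⟩)
    (hPRdeg : PR.degree ≤ 3)
    (hPR : ∀ k : Fin 4, PR.eval (x₀ + ((k : ℕ) + 2) * Δx) = v ⟨(k : ℕ) + 2, by omega⟩) :
    (∀ x : ℝ, P.eval x =
        (x - (x₀ + 4 * Δx)) * (x - (x₀ + 5 * Δx)) / (20 * Δx ^ 2) * PL.eval x
      + (-((x - x₀) * (x - (x₀ + 5 * Δx)) / (10 * Δx ^ 2))) * PC.eval x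
      + (x - x₀) * (x - (x₀ + Δx)) / (20 * Δx ^ 2) * PR.eval x) ∧
    (∀ x : ℝ, (x - (x₀ + 4 * Δx)) * (x - (x₀ + 5 * Δx)) / (20 * Δx ^ 2)
      + (-((x - x₀) * (x - (x₀ + 5 * Δx)) / (10 * Δx ^ 2)))
      + (x - x₀) * (x - (x₀ + Δx)) / (20 * Δx ^ 2) = 1) := by
  have hne : Δx ≠ 0 := hΔx.ne'
  have hsum : ∀ x : ℝ, (x - (x₀ + 4 * Δx)) * (x - (x₀ + 5 * Δx)) / (20 * Δx ^ 2)
      + (-((x - x₀) * (x - (x₀ + 5 * Δx)) / (10 * Δx ^ 2)))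
      + (x - x₀) * (x - (x₀ + Δx)) / (20 * Δx ^ 2) = 1 := by
    intro x
    field_simp
    ring
  refine ⟨?_, hsum⟩
  let Q : Polynomial ℝ :=
    .C (1 / (20 * Δx ^ 2)) * ((.X - .C (x₀ + 4 * Δx)) * (.X - .C (x₀ + 5 * Δx))) * PL
    + .C (-(1 / (10 * Δx ^ 2))) * ((.X - .C x₀) * (.X - .C (x₀ + 5 * Δx))) * PC
    + .C (1 / (20 * Δx ^ 2)) * ((.X - .C x₀) * (.X - .C (x₀ + Δx))) * PR
  have hQ : ∀ x : ℝ, Q.eval x =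
        (x - (x₀ + 4 * Δx)) * (x - (x₀ + 5 * Δx)) / (20 * Δx ^ 2) * PL.eval x
      + (-((x - x₀) * (x - (x₀ + 5 * Δx)) / (10 * Δx ^ 2))) * PC.eval x
      + (x - x₀) * (x - (x₀ + Δx)) / (20 * Δx ^ 2) * PR.eval x := by
    intro x
    simp only [Q, Polynomial.eval_add, Polynomial.eval_mul, Polynomial.eval_sub,
      Polynomial.eval_C, Polynomial.eval_X]
    ring
  have hQdeg : Q.degree ≤ 5 :=
    Polynomial.degree_add_le_of_degree_le
      (Polynomial.degree_add_le_of_degree_le (degree_weight_mul_le _ _ _ _ hPLdeg)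
        (degree_weight_mul_le _ _ _ _ hPCdeg))
      (degree_weight_mul_le _ _ _ _ hPRdeg)
  have hnode : ∀ k : Fin 6, Q.eval (x₀ + (k : ℕ) * Δx) = v k := by
    have hL0 := hPL 0
    have hL1 := hPL 1
    have hL2 := hPL 2
    have hL3 := hPL 3
    have hC0 := hPC 0
    have hC1 := hPC 1
    have hC2 := hPC 2
    have hC3 := hPC 3
    have hR0 := hPR 0
    have hR1 := hPR 1
    have hR2 := hPR 2
    have hR3 := hPR 3
    norm_num at hL0 hL1 hL2 hL3 hC0 hC1 hC2 hC3 hR0 hR1 hR2 hR3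
    intro k
    rw [hQ]
    fin_cases k <;> norm_num [*] <;> field_simp <;> ring
  have hPQ : P = Q := by
    have h56 : (5 : WithBot ℕ) < ((Finset.univ : Finset (Fin 6)).card : WithBot ℕ) := by
      simp only [Finset.card_univ, Fintype.card_fin]
      norm_num
    refine Polynomial.eq_of_degrees_lt_of_eval_index_eq (Finset.univ : Finset (Fin 6))
      (v := fun k : Fin 6 => x₀ + ((k : ℕ) : ℝ) * Δx) ?_ (hPdeg.trans_lt h56)
      (hQdeg.trans_lt h56) (fun k _ => (hP k).trans (hnode k).symm)
    intro a _ b _ hab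
    have h : ((a : ℕ) : ℝ) = ((b : ℕ) : ℝ) := mul_right_cancel₀ hne (add_left_cancel hab)
    exact Fin.ext (by exact_mod_cast h)
  intro x
  rw [hPQ, hQ]
end
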